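/- If a vector θ ∈ C^N has at most K nonzero entries (K-sparse) and A ∈ C^{M×N} is a matrix such that every 2K columns of A are linearly independent, then θ is the unique K-sparse solution of Aθ = y for y = Aθ: any other θ' with at most K nonzero entries and Aθ' = y satisfies θ' = θ. -/

import Mathlib

open Matrix

/-- The family `v` is `k`-wise linearly independent: any subfamily with at most `k` indices is
linearly independent. For the columns of a matrix this says that the spark exceeds `k`. -/
def KWiseLinearIndep (R : Type*) {ι M : Type*} [Semiring R] [AddCommMonoid M] [Module R M]
    (k : ℕ) (v : ι → M) : Prop :=
  ∀ s : Finset ι, s.card ≤ k → LinearIndepOn R v (s : Set ι)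

theorem KWiseLinearIndep.eq_of_linearCombination_eq {R ι M : Type*} [Semiring R]
    [AddCommMonoid M] [Module R M] {k : ℕ} {v : ι → M} (hv : KWiseLinearIndep R k v)
    {f g : ι →₀ R} (hcard : f.support.card + g.support.card ≤ k)
    (hfg : Finsupp.linearCombination R v f = Finsupp.linearCombination R v g) : f = g := by
  classical
  have hindep : LinearIndepOn R v (f.support ∪ g.support : Finset ι) :=
    hv _ ((Finset.card_union_le _ _).trans hcard)
  have hf : f ∈ Finsupp.supported R R (f.support ∪ g.support : Finset ι) :=
    Finset.coe_subset.mpr Finset.subset_union_left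
  have hg : g ∈ Finsupp.supported R R (f.support ∪ g.support : Finset ι) :=
    Finset.coe_subset.mpr Finset.subset_union_right
  exact linearIndepOn_iffₛ.mp hindep f hf g hg hfg

theorem hammingNorm_coe_finsupp {ι R : Type*} [Fintype ι] [Zero R] [DecidableEq R]
    (f : ι →₀ R) : hammingNorm (f : ι → R) = f.support.card :=
  congrArg Finset.card (by ext i; simp)

theorem mulVec_coe_finsupp {m n R : Type*} [Fintype n] [CommSemiring R] (A : Matrix m n R)
    (f : n →₀ R) : A *ᵥ f = Finsupp.linearCombination R A.col f := by
  rw [Finsupp.linearCombination_apply,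
    Finsupp.sum_fintype f (fun i a => a • A.col i) fun _ => zero_smul R _, mulVec_eq_sum]
  simp only [op_smul_eq_smul, col_def]

theorem sparse_unique_solution_general {m n R : Type*} [Fintype n] [CommSemiring R]
    [DecidableEq R] {k : ℕ} {A : Matrix m n R} (hA : KWiseLinearIndep R k A.col) {x y : n → R}
    (hcard : hammingNorm x + hammingNorm y ≤ k) (hxy : A *ᵥ x = A *ᵥ y) : x = y := by
  lift x to n →₀ R using Set.toFinite _
  lift y to n →₀ R using Set.toFinite _
  rw [hammingNorm_coe_finsupp, hammingNorm_coe_finsupp] at hcard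
  rw [mulVec_coe_finsupp, mulVec_coe_finsupp] at hxy
  rw [hA.eq_of_linearCombination_eq hcard hxy]

/-- If every family of at most `2K` columns of `A` is linearly independent,
then a `K`-sparse vector `θ` is the unique `K`-sparse solution of `A θ' = A θ`. -/
theorem sparse_unique_solution (M N K : ℕ) (A : Matrix (Fin M) (Fin N) ℂ)
    (hA : ∀ T : Finset (Fin N), T.card ≤ 2 * K →
      LinearIndependent ℂ (fun t : T => Aᵀ (t : Fin N)))
    (θ : Fin N → ℂ) (hθ : (Finset.univ.filter fun i => θ i ≠ 0).card ≤ K)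
    (θ' : Fin N → ℂ) (hθ' : (Finset.univ.filter fun i => θ' i ≠ 0).card ≤ K)
    (hsol : A.mulVec θ' = A.mulVec θ) :
    θ' = θ :=
  sparse_unique_solution_general hA ((add_le_add hθ' hθ).trans_eq (two_mul K).symm) hsol
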